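/- arXiv:2112.15182 — 3 statements merged into one kernel-verified Lean document; each statement's English description precedes it below -/
import Mathlib

section
/- (Matrix inverse lifting lemma.) Let M be an invertible n×n matrix over ℂ and let (P, Q) be complementary projection frames with P ∈ ℂ^{n×r}, Q ∈ ℂ^{n×(n−r)}. If PᵀMP and QᵀM⁻¹Q are both invertible, then P(PᵀMP)⁻¹Pᵀ = M⁻¹ − M⁻¹Q(QᵀM⁻¹Q)⁻¹QᵀM⁻¹. -/
open Matrix

/-!
Write `P'`, `Q'` for `Pᵀ`, `Qᵀ`, and let `X` be the right-hand side, the Wedderburn reduction of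
`M⁻¹` along `Q`, `Q'`. It satisfies `Q' * X = 0` and `P' * M * X = P'`. A one-sided inverse of a
square matrix is two-sided, so `P * P' + Q * Q' = 1`, and the first equation gives
`X = P * (P' * X)`. Substituting this into the second gives `(P' * M * P) * (P' * X) = P'`.
Multiplying by `P` on the right shows that `P' * M * P` is invertible; hence
`P' * X = (P' * M * P)⁻¹ * P'`, and multiplying by `P` on the left recovers `X`.
-/

section Frames

variable {k l m n R : Type*} [Fintype k] [Fintype l] [Fintype m] [DecidableEq m]

theorem mul_add_mul_eq_one_of_biorthogonal [DecidableEq k] [DecidableEq l] [CommRing R]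
    {P : Matrix m k R} {P' : Matrix k m R} {Q : Matrix m l R} {Q' : Matrix l m R} (e : m ≃ k ⊕ l)
    (hP : P' * P = 1) (hPQ : P' * Q = 0) (hQP : Q' * P = 0) (hQ : Q' * Q = 1) :
    P * P' + Q * Q' = 1 := by
  rw [← fromCols_mul_fromRows, fromCols_mul_fromRows_eq_one_comm e, fromRows_mul_fromCols,
    hP, hPQ, hQP, hQ, fromBlocks_one]

theorem mul_mul_eq_self_of_add_eq_one [Semiring R]
    {P : Matrix m k R} {P' : Matrix k m R} {Q : Matrix m l R} {Q' : Matrix l m R}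
    {X : Matrix m n R} (hsum : P * P' + Q * Q' = 1) (hX : Q' * X = 0) :
    P * (P' * X) = X := by
  calc P * (P' * X) = P * (P' * X) + Q * (Q' * X) := by rw [hX, Matrix.mul_zero, add_zero]
    _ = (P * P' + Q * Q') * X := by simp only [Matrix.add_mul, Matrix.mul_assoc]
    _ = X := by rw [hsum, Matrix.one_mul]

end Frames

section WedderburnReduction

variable {k l m n R : Type*} [Fintype l] [DecidableEq l] [Fintype m] [Fintype n] [CommRing R]

/-- The Wedderburn rank reduction of `A` along `Q` and `Q'`. It is annihilated by `Q'` on the left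
when `Q' * A * Q` is invertible; otherwise the inverse is `0` and the reduction is `A` itself. -/
noncomputable def wedderburnReduction (A : Matrix m n R) (Q : Matrix n l R) (Q' : Matrix l m R) :
    Matrix m n R :=
  A - A * Q * (Q' * A * Q)⁻¹ * Q' * A

theorem mul_wedderburnReduction_eq_zero {A : Matrix m n R} {Q : Matrix n l R} {Q' : Matrix l m R}
    (h : IsUnit (Q' * A * Q)) : Q' * wedderburnReduction A Q Q' = 0 := by
  rw [isUnit_iff_isUnit_det] at h
  calc Q' * wedderburnReduction A Q Q'
      = Q' * A - Q' * A * Q * (Q' * A * Q)⁻¹ * (Q' * A) := by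
        simp only [wedderburnReduction, Matrix.mul_sub, Matrix.mul_assoc]
    _ = 0 := by rw [mul_nonsing_inv _ h, Matrix.one_mul, sub_self]

theorem mul_mul_wedderburnReduction [DecidableEq n] {M : Matrix n m R} {A : Matrix m n R}
    {P' : Matrix k n R} {Q : Matrix n l R} (Q' : Matrix l m R)
    (hMA : M * A = 1) (hPQ : P' * Q = 0) :
    P' * M * wedderburnReduction A Q Q' = P' := by
  calc P' * M * wedderburnReduction A Q Q'
      = P' * (M * A) - P' * (M * A) * Q * (Q' * A * Q)⁻¹ * Q' * A := by
        simp only [wedderburnReduction, Matrix.mul_sub, Matrix.mul_assoc]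
    _ = P' := by simp only [hMA, Matrix.mul_one, hPQ, Matrix.zero_mul, sub_zero]

end WedderburnReduction

section Compression

variable {k l m R : Type*} [Fintype k] [Fintype l] [DecidableEq l]
  [Fintype m] [DecidableEq m] [CommRing R]
  {M : Matrix m m R} {P : Matrix m k R} {P' : Matrix k m R} {Q : Matrix m l R} {Q' : Matrix l m R}

theorem compression_mul_wedderburnReduction_inv (hsum : P * P' + Q * Q' = 1) (hPQ : P' * Q = 0)
    (hM : IsUnit M) (hQMQ : IsUnit (Q' * M⁻¹ * Q)) :
    P' * M * P * (P' * wedderburnReduction M⁻¹ Q Q') = P' := by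
  have hMM : M * M⁻¹ = 1 := mul_nonsing_inv M ((isUnit_iff_isUnit_det M).mp hM)
  rw [Matrix.mul_assoc (P' * M),
    mul_mul_eq_self_of_add_eq_one hsum (mul_wedderburnReduction_eq_zero hQMQ),
    mul_mul_wedderburnReduction Q' hMM hPQ]

theorem isUnit_compression [DecidableEq k] (hsum : P * P' + Q * Q' = 1) (hP : P' * P = 1)
    (hPQ : P' * Q = 0) (hM : IsUnit M) (hQMQ : IsUnit (Q' * M⁻¹ * Q)) :
    IsUnit (P' * M * P) := by
  refine IsUnit.of_mul_eq_one (P' * wedderburnReduction M⁻¹ Q Q' * P) ?_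
  rw [← Matrix.mul_assoc, compression_mul_wedderburnReduction_inv hsum hPQ hM hQMQ, hP]

theorem matrix_inverse_lifting_general [DecidableEq k]
    (hsum : P * P' + Q * Q' = 1) (hP : P' * P = 1) (hPQ : P' * Q = 0)
    (hM : IsUnit M) (hQMQ : IsUnit (Q' * M⁻¹ * Q)) :
    P * (P' * M * P)⁻¹ * P' = M⁻¹ - M⁻¹ * Q * (Q' * M⁻¹ * Q)⁻¹ * Q' * M⁻¹ := by
  change _ = wedderburnReduction M⁻¹ Q Q'
  have hdet : IsUnit (P' * M * P).det :=
    (isUnit_iff_isUnit_det _).mp (isUnit_compression hsum hP hPQ hM hQMQ)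
  have hsolve : (P' * M * P)⁻¹ * P' = P' * wedderburnReduction M⁻¹ Q Q' := by
    rw [← nonsing_inv_mul_cancel_left _ (P' * wedderburnReduction M⁻¹ Q Q') hdet,
      compression_mul_wedderburnReduction_inv hsum hPQ hM hQMQ]
  rw [Matrix.mul_assoc, hsolve,
    mul_mul_eq_self_of_add_eq_one hsum (mul_wedderburnReduction_eq_zero hQMQ)]

end Compression

/-- Matrix inverse lifting lemma: for invertible `M` and complementary projection frames
`(P, Q)`, if `PᵀMP` and `QᵀM⁻¹Q` are invertible then
`P(PᵀMP)⁻¹Pᵀ = M⁻¹ − M⁻¹Q(QᵀM⁻¹Q)⁻¹QᵀM⁻¹`. -/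
theorem matrix_inverse_lifting
    {n r : ℕ} (hr : r ≤ n)
    (M : Matrix (Fin n) (Fin n) ℂ)
    (P : Matrix (Fin n) (Fin r) ℂ) (Q : Matrix (Fin n) (Fin (n - r)) ℂ)
    (hP : Pᵀ * P = 1) (hQ : Qᵀ * Q = 1) (hQP : Qᵀ * P = 0)
    (hM : IsUnit M) (hMPP : IsUnit (Pᵀ * M * P)) (hMiQQ : IsUnit (Qᵀ * M⁻¹ * Q)) :
    P * (Pᵀ * M * P)⁻¹ * Pᵀ = M⁻¹ - M⁻¹ * Q * (Qᵀ * M⁻¹ * Q)⁻¹ * Qᵀ * M⁻¹ := by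
  have hPQ : Pᵀ * Q = 0 := by simpa using congrArg transpose hQP
  have e : Fin n ≃ Fin r ⊕ Fin (n - r) :=
    (finSumFinEquiv.trans (finCongr (Nat.add_sub_of_le hr))).symm
  exact matrix_inverse_lifting_general (mul_add_mul_eq_one_of_biorthogonal e hP hPQ hQP hQ)
    hP hPQ hM hMiQQ
end

section
/- Let A ∈ ℂ^{n×n}, let (P, Q) be complementary projection frames with P ∈ ℂ^{n×r}, Q ∈ ℂ^{n×(n−r)}, and let s ∈ ℂ be such that Φ = sI_n − A, sI_r − PᵀAP, and QᵀΦ⁻¹Q are all invertible. Then Φ⁻¹Q(QᵀΦ⁻¹Q)⁻¹ = Q + P(sI_r − PᵀAP)⁻¹PᵀAQ. -/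
open Matrix

/-!
Let `U` and `V` be the row frames dual to `P` and `Q` (here `Pᵀ` and `Qᵀ`), so that `PU + QV = 1`,
and put `X = Q - P (UΦP)⁻¹ UΦQ`. Then `VX = 1` and `UΦX = 0`. The second equation says `ΦX = QY`
with `Y = VΦX`, that is, `X = Φ⁻¹QY`, and the first one then reads `(VΦ⁻¹Q) Y = 1`.
Hence `Φ⁻¹Q (VΦ⁻¹Q)⁻¹ = Φ⁻¹QY = X`. For `Φ = s • 1 - A`, biorthogonality gives
`UΦP = s • 1 - UAP` and `UΦQ = -UAQ`.
-/

section BiorthogonalFrames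

variable {R n p q : Type*} [Fintype n] [DecidableEq n] [Fintype p] [Fintype q] [DecidableEq q]

theorem mul_add_mul_eq_one_of_biorthogonal_s6 [Semiring R] [IsStablyFiniteRing R] [DecidableEq p]
    {P : Matrix n p R} {Q : Matrix n q R} {U : Matrix p n R} {V : Matrix q n R}
    (hcard : Fintype.card n = Fintype.card p + Fintype.card q)
    (hUP : U * P = 1) (hVQ : V * Q = 1) (hVP : V * P = 0) (hUQ : U * Q = 0) :
    P * U + Q * V = 1 := by
  have hrows : fromRows U V * fromCols P Q = 1 := by
    rw [fromRows_mul_fromCols, hUP, hVQ, hVP, hUQ, fromBlocks_one]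
  rw [← fromCols_mul_fromRows]
  exact (mul_eq_one_comm_of_card_eq _ _ _ (by rw [hcard, Fintype.card_sum])).2 hrows

variable [CommRing R] {P : Matrix n p R} {Q : Matrix n q R} {U : Matrix p n R} {V : Matrix q n R}

theorem inv_mul_mul_inv_eq_of_mul_eq_one {Φ : Matrix n n R} {X : Matrix n q R}
    (hPQ : P * U + Q * V = 1) (hΦ : IsUnit Φ) (hVX : V * X = 1) (hUΦX : U * (Φ * X) = 0) :
    Φ⁻¹ * Q * (V * Φ⁻¹ * Q)⁻¹ = X := by
  have hΦX : Q * (V * (Φ * X)) = Φ * X := by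
    calc Q * (V * (Φ * X)) = (P * U + Q * V) * (Φ * X) := by
          rw [Matrix.add_mul, Matrix.mul_assoc P, hUΦX, Matrix.mul_zero, zero_add, Matrix.mul_assoc]
      _ = Φ * X := by rw [hPQ, Matrix.one_mul]
  have hX : Φ⁻¹ * Q * (V * (Φ * X)) = X := by
    rw [Matrix.mul_assoc, hΦX, nonsing_inv_mul_cancel_left _ _ ((isUnit_iff_isUnit_det Φ).1 hΦ)]
  have hinv : V * Φ⁻¹ * Q * (V * (Φ * X)) = 1 := by
    rw [Matrix.mul_assoc V, Matrix.mul_assoc V, hX, hVX]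
  rw [inv_eq_right_inv hinv, hX]

variable [DecidableEq p]

theorem inv_mul_mul_inv_eq_sub {Φ : Matrix n n R} (hPQ : P * U + Q * V = 1)
    (hVQ : V * Q = 1) (hVP : V * P = 0) (hΦ : IsUnit Φ) (hUΦP : IsUnit (U * Φ * P)) :
    Φ⁻¹ * Q * (V * Φ⁻¹ * Q)⁻¹ = Q - P * (U * Φ * P)⁻¹ * (U * Φ * Q) := by
  apply inv_mul_mul_inv_eq_of_mul_eq_one hPQ hΦ
  · rw [Matrix.mul_sub, hVQ, Matrix.mul_assoc P, ← Matrix.mul_assoc V, hVP, Matrix.zero_mul,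
      sub_zero]
  · rw [← Matrix.mul_assoc, Matrix.mul_sub, Matrix.mul_assoc P, ← Matrix.mul_assoc _ P,
      mul_nonsing_inv_cancel_left _ _ ((isUnit_iff_isUnit_det _).1 hUΦP), sub_self]

theorem prom_theta_factor_identity_general
    (hcard : Fintype.card n = Fintype.card p + Fintype.card q) (A : Matrix n n R)
    (hUP : U * P = 1) (hVQ : V * Q = 1) (hVP : V * P = 0) (hUQ : U * Q = 0) (s : R)
    (hΦ : IsUnit (s • (1 : Matrix n n R) - A))
    (hΦr : IsUnit (s • (1 : Matrix p p R) - U * A * P)) :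
    (s • (1 : Matrix n n R) - A)⁻¹ * Q * (V * (s • (1 : Matrix n n R) - A)⁻¹ * Q)⁻¹ =
      Q + P * (s • (1 : Matrix p p R) - U * A * P)⁻¹ * (U * A * Q) := by
  have hUΦP : U * (s • (1 : Matrix n n R) - A) * P = s • (1 : Matrix p p R) - U * A * P := by
    simp [Matrix.mul_sub, Matrix.sub_mul, hUP]
  have hUΦQ : U * (s • (1 : Matrix n n R) - A) * Q = -(U * A * Q) := by
    simp [Matrix.mul_sub, Matrix.sub_mul, hUQ]
  have hPQ := mul_add_mul_eq_one_of_biorthogonal_s6 hcard hUP hVQ hVP hUQ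
  rw [inv_mul_mul_inv_eq_sub hPQ hVQ hVP hΦ (hUΦP ▸ hΦr), hUΦP, hUΦQ, Matrix.mul_neg,
    sub_neg_eq_add]

end BiorthogonalFrames

/-- `Φ⁻¹Q(QᵀΦ⁻¹Q)⁻¹ = Q + P(sI_r − PᵀAP)⁻¹PᵀAQ` where `Φ = sI_n − A`,
for complementary projection frames `(P, Q)`. -/
theorem prom_theta_factor_identity
    {n r : ℕ} (hr : r ≤ n)
    (A : Matrix (Fin n) (Fin n) ℂ)
    (P : Matrix (Fin n) (Fin r) ℂ) (Q : Matrix (Fin n) (Fin (n - r)) ℂ)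
    (hP : Pᵀ * P = 1) (hQ : Qᵀ * Q = 1) (hQP : Qᵀ * P = 0)
    (s : ℂ)
    (hΦ : IsUnit (s • (1 : Matrix (Fin n) (Fin n) ℂ) - A))
    (hΦr : IsUnit (s • (1 : Matrix (Fin r) (Fin r) ℂ) - Pᵀ * A * P))
    (hΔ : IsUnit (Qᵀ * (s • (1 : Matrix (Fin n) (Fin n) ℂ) - A)⁻¹ * Q)) :
    (s • (1 : Matrix (Fin n) (Fin n) ℂ) - A)⁻¹ * Q *
        (Qᵀ * (s • (1 : Matrix (Fin n) (Fin n) ℂ) - A)⁻¹ * Q)⁻¹ =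
      Q + P * (s • (1 : Matrix (Fin r) (Fin r) ℂ) - Pᵀ * A * P)⁻¹ * (Pᵀ * A * Q) :=
  prom_theta_factor_identity_general (by simp [Nat.add_sub_cancel' hr]) A hP hQ hQP
    (by simpa using congrArg transpose hQP) s hΦ hΦr
end

section
/- Let A ∈ ℂ^{n×n}, let (P, Q) be complementary projection frames with P ∈ ℂ^{n×r}, Q ∈ ℂ^{n×(n−r)}, and let s ∈ ℂ be such that Φ = sI_n − A, sI_r − PᵀAP, and QᵀΦ⁻¹Q are all invertible. Then (QᵀΦ⁻¹Q)⁻¹QᵀΦ⁻¹ = QᵀAP(sI_r − PᵀAP)⁻¹Pᵀ + Qᵀ. -/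
open Matrix

/-!
Put `Γ = Q' - Q'ΦP (P'ΦP)⁻¹ P'`, where `P'`, `Q'` are the dual frames (`Pᵀ`, `Qᵀ` in the orthogonal
case). Then `ΓQ = 1` and `ΓΦP = 0`, so that `ΓΦ = ΓΦ(PP' + QQ') = (ΓΦQ)Q'`, that is,
`Γ = (ΓΦQ)(Q'Φ⁻¹)`. Multiplying by `Q` on the right shows that `ΓΦQ` is the inverse of `Q'Φ⁻¹Q`.
For `Φ = s - A` the off-diagonal block `Q'ΦP` is `-Q'AP`, since `Q'P = 0`.
-/

variable {R n k l : Type*} [Fintype n]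

lemma mul_smul_one_sub_mul [CommRing R] [DecidableEq n] (s : R) (A : Matrix n n R)
    (X : Matrix k n R) (Y : Matrix n l R) :
    X * (s • (1 : Matrix n n R) - A) * Y = s • (X * Y) - X * A * Y := by
  simp only [Matrix.mul_sub, Matrix.sub_mul, Matrix.mul_smul, Matrix.smul_mul, Matrix.mul_one]

variable [Fintype k]

section GammaFactor

variable [CommRing R] [DecidableEq k]

/-- The factor `Γ = Q' - Q'FP (P'FP)⁻¹ P'`: the block row `Q'` after block Gaussian elimination of
the `P`-block of `F`. The inverse is only meaningful when `P'FP` is invertible. -/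
noncomputable def gammaFactor (F : Matrix n n R) (P : Matrix n k R) (P' : Matrix k n R)
    (Q' : Matrix l n R) : Matrix l n R :=
  Q' - Q' * F * P * (P' * F * P)⁻¹ * P'

lemma gammaFactor_mul_mul_eq_zero {F : Matrix n n R} {P : Matrix n k R} {P' : Matrix k n R}
    (Q' : Matrix l n R) (hPFP : IsUnit (P' * F * P)) : gammaFactor F P P' Q' * F * P = 0 := by
  have hcancel : Q' * F * P * (P' * F * P)⁻¹ * (P' * F * P) = Q' * F * P :=
    nonsing_inv_mul_cancel_right _ _ ((isUnit_iff_isUnit_det _).1 hPFP)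
  calc gammaFactor F P P' Q' * F * P
      = Q' * F * P - Q' * F * P * (P' * F * P)⁻¹ * (P' * F * P) := by
        simp only [gammaFactor, Matrix.sub_mul, Matrix.mul_assoc]
    _ = 0 := by rw [hcancel, sub_self]

end GammaFactor

variable [Fintype l]

lemma inv_mul_eq_of_mul_eq_zero [CommRing R] [DecidableEq n] [DecidableEq l]
    {P : Matrix n k R} {Q : Matrix n l R} {P' : Matrix k n R} {Q' : Matrix l n R}
    (hPQ : P * P' + Q * Q' = 1) {F : Matrix n n R} {G : Matrix l n R} (hF : IsUnit F)
    (hGQ : G * Q = 1) (hGFP : G * F * P = 0) :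
    (Q' * F⁻¹ * Q)⁻¹ * (Q' * F⁻¹) = G := by
  have hGF : G * F * Q * Q' = G * F := by
    calc G * F * Q * Q' = G * F * P * P' + G * F * Q * Q' := by
          rw [hGFP, Matrix.zero_mul, zero_add]
      _ = G * F * (P * P' + Q * Q') := by simp only [Matrix.mul_add, Matrix.mul_assoc]
      _ = G * F := by rw [hPQ, Matrix.mul_one]
  have hG : G * F * Q * (Q' * F⁻¹) = G := by
    rw [← Matrix.mul_assoc, hGF, mul_nonsing_inv_cancel_right _ _ ((isUnit_iff_isUnit_det F).1 hF)]
  have hinv : G * F * Q * (Q' * F⁻¹ * Q) = 1 := by rw [← Matrix.mul_assoc, hG, hGQ]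
  rw [inv_eq_left_inv hinv, hG]

/-- Complementary oblique frames: the columns of `P` and `Q` together form a basis of `Rⁿ`, and the
rows of `P'` and `Q'` form the dual basis. A pair of complementary projection frames is the
orthogonal case `P' = Pᵀ`, `Q' = Qᵀ`. -/
structure IsComplementaryFrames [Semiring R] [DecidableEq n] [DecidableEq k] [DecidableEq l]
    (P : Matrix n k R) (Q : Matrix n l R) (P' : Matrix k n R) (Q' : Matrix l n R) : Prop where
  dual_left_mul_left : P' * P = 1
  dual_right_mul_right : Q' * Q = 1
  mul_dual_add_mul_dual : P * P' + Q * Q' = 1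

namespace IsComplementaryFrames

variable [DecidableEq n] [DecidableEq k] [DecidableEq l]
  {P : Matrix n k R} {Q : Matrix n l R} {P' : Matrix k n R} {Q' : Matrix l n R}

lemma symm [Semiring R] (h : IsComplementaryFrames P Q P' Q') :
    IsComplementaryFrames Q P Q' P' where
  dual_left_mul_left := h.dual_right_mul_right
  dual_right_mul_right := h.dual_left_mul_left
  mul_dual_add_mul_dual := by rw [add_comm, h.mul_dual_add_mul_dual]

lemma dual_left_mul_right [Ring R] (h : IsComplementaryFrames P Q P' Q') : P' * Q = 0 := by
  have hPQQ : P' * Q * Q' = 0 := by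
    rw [Matrix.mul_assoc, eq_sub_of_add_eq' h.mul_dual_add_mul_dual, Matrix.mul_sub,
      ← Matrix.mul_assoc, h.dual_left_mul_left, Matrix.mul_one, Matrix.one_mul, sub_self]
  calc P' * Q = P' * Q * (Q' * Q) := by rw [h.dual_right_mul_right, Matrix.mul_one]
    _ = 0 := by rw [← Matrix.mul_assoc, hPQQ, Matrix.zero_mul]

lemma dual_right_mul_left [Ring R] (h : IsComplementaryFrames P Q P' Q') : Q' * P = 0 :=
  h.symm.dual_left_mul_right

lemma of_equiv [Semiring R] [IsStablyFiniteRing R] (e : k ⊕ l ≃ n) (hP : P' * P = 1)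
    (hQ : Q' * Q = 1) (hPQ : P' * Q = 0) (hQP : Q' * P = 0) : IsComplementaryFrames P Q P' Q' where
  dual_left_mul_left := hP
  dual_right_mul_right := hQ
  mul_dual_add_mul_dual := by
    have h : fromRows P' Q' * fromCols P Q = 1 := by
      rw [fromRows_mul_fromCols, hP, hQ, hPQ, hQP, fromBlocks_one]
    rwa [mul_eq_one_comm_of_equiv e, fromCols_mul_fromRows] at h

lemma of_transpose [CommSemiring R] (e : k ⊕ l ≃ n) (hP : Pᵀ * P = 1) (hQ : Qᵀ * Q = 1)
    (hQP : Qᵀ * P = 0) : IsComplementaryFrames P Q Pᵀ Qᵀ :=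
  of_equiv e hP hQ (by simpa using congrArg transpose hQP) hQP

variable [CommRing R]

lemma gammaFactor_mul_right (h : IsComplementaryFrames P Q P' Q') (F : Matrix n n R) :
    gammaFactor F P P' Q' * Q = 1 := by
  rw [gammaFactor, Matrix.sub_mul, Matrix.mul_assoc _ P' Q, h.dual_left_mul_right,
    Matrix.mul_zero, sub_zero, h.dual_right_mul_right]

lemma gammaFactor_smul_one_sub (h : IsComplementaryFrames P Q P' Q') (A : Matrix n n R) (s : R) :
    gammaFactor (s • (1 : Matrix n n R) - A) P P' Q' =
      Q' * A * P * (s • (1 : Matrix k k R) - P' * A * P)⁻¹ * P' + Q' := by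
  rw [gammaFactor, mul_smul_one_sub_mul, mul_smul_one_sub_mul, h.dual_right_mul_left,
    h.dual_left_mul_left, smul_zero, zero_sub, Matrix.neg_mul, Matrix.neg_mul, sub_neg_eq_add,
    add_comm]

lemma inv_mul_eq_gammaFactor (h : IsComplementaryFrames P Q P' Q') {F : Matrix n n R}
    (hF : IsUnit F) (hPFP : IsUnit (P' * F * P)) :
    (Q' * F⁻¹ * Q)⁻¹ * (Q' * F⁻¹) = gammaFactor F P P' Q' :=
  inv_mul_eq_of_mul_eq_zero h.mul_dual_add_mul_dual hF (h.gammaFactor_mul_right F)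
    (gammaFactor_mul_mul_eq_zero Q' hPFP)

end IsComplementaryFrames

theorem prom_gamma_factor_identity_general [CommRing R] [DecidableEq n] [DecidableEq k]
    [DecidableEq l] {P : Matrix n k R} {Q : Matrix n l R} {P' : Matrix k n R} {Q' : Matrix l n R}
    (h : IsComplementaryFrames P Q P' Q') (A : Matrix n n R) (s : R)
    (hΦ : IsUnit (s • (1 : Matrix n n R) - A))
    (hΦr : IsUnit (s • (1 : Matrix k k R) - P' * A * P)) :
    (Q' * (s • (1 : Matrix n n R) - A)⁻¹ * Q)⁻¹ * (Q' * (s • (1 : Matrix n n R) - A)⁻¹) =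
      Q' * A * P * (s • (1 : Matrix k k R) - P' * A * P)⁻¹ * P' + Q' := by
  have hPΦP : P' * (s • (1 : Matrix n n R) - A) * P = s • (1 : Matrix k k R) - P' * A * P := by
    rw [mul_smul_one_sub_mul, h.dual_left_mul_left]
  rw [h.inv_mul_eq_gammaFactor hΦ (hPΦP ▸ hΦr), h.gammaFactor_smul_one_sub]

/-- `(QᵀΦ⁻¹Q)⁻¹QᵀΦ⁻¹ = QᵀAP(sI_r − PᵀAP)⁻¹Pᵀ + Qᵀ` where `Φ = sI_n − A`,
for complementary projection frames `(P, Q)`. -/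
theorem prom_gamma_factor_identity
    {n r : ℕ} (hr : r ≤ n)
    (A : Matrix (Fin n) (Fin n) ℂ)
    (P : Matrix (Fin n) (Fin r) ℂ) (Q : Matrix (Fin n) (Fin (n - r)) ℂ)
    (hP : Pᵀ * P = 1) (hQ : Qᵀ * Q = 1) (hQP : Qᵀ * P = 0)
    (s : ℂ)
    (hΦ : IsUnit (s • (1 : Matrix (Fin n) (Fin n) ℂ) - A))
    (hΦr : IsUnit (s • (1 : Matrix (Fin r) (Fin r) ℂ) - Pᵀ * A * P))
    (hΔ : IsUnit (Qᵀ * (s • (1 : Matrix (Fin n) (Fin n) ℂ) - A)⁻¹ * Q)) :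
    (Qᵀ * (s • (1 : Matrix (Fin n) (Fin n) ℂ) - A)⁻¹ * Q)⁻¹ *
        (Qᵀ * (s • (1 : Matrix (Fin n) (Fin n) ℂ) - A)⁻¹) =
      Qᵀ * A * P * (s • (1 : Matrix (Fin r) (Fin r) ℂ) - Pᵀ * A * P)⁻¹ * Pᵀ + Qᵀ :=
  prom_gamma_factor_identity_general
    (.of_transpose (finSumFinEquiv.trans (finCongr (Nat.add_sub_of_le hr))) hP hQ hQP) A s hΦ hΦr
end
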